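/- Let τ = exp(−iπ/9)·(√5 + i·√3)/2 and p = 4. Then the lattice S(p,τ) is generated by the union of two mirror stabilizers: the subgroup of GL(3,ℂ) generated by Stab(m₁) ∪ Stab(m₂) equals S(p,τ), where m₁ is the mirror of the complex reflection R₁ and m₂ = span_ℂ{e₁, R₂·e₃} is the mirror of the complex reflection (R₁·R₂R₃R₂⁻¹)⁵. -/

import Mathlib

open Matrix

noncomputable section

/-- `u = exp(2πi/(3p))`. -/
def uPar (p : ℕ) : ℂ := Complex.exp (2 * Real.pi * Complex.I / (3 * p))

/-- `α = 2 − u³ − conj(u)³`. -/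
def alphaPar (p : ℕ) : ℂ :=
  2 - uPar p ^ 3 - starRingEnd ℂ (uPar p) ^ 3

/-- `β = (conj(u)² − u)·τ`. -/
def betaPar (p : ℕ) (τ : ℂ) : ℂ := (starRingEnd ℂ (uPar p) ^ 2 - uPar p) * τ

/-- The generator `R₁` of `S(p,τ)`. -/
def R1S (p : ℕ) (τ : ℂ) : Matrix (Fin 3) (Fin 3) ℂ :=
  !![uPar p ^ 2, τ, -(uPar p) * starRingEnd ℂ τ;
     0, starRingEnd ℂ (uPar p), 0;
     0, 0, starRingEnd ℂ (uPar p)]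

/-- The reflection `R₂ = J·R₁·J⁻¹` of `S(p,τ)`. -/
def R2S (p : ℕ) (τ : ℂ) : Matrix (Fin 3) (Fin 3) ℂ :=
  !![starRingEnd ℂ (uPar p), 0, 0;
     -(uPar p) * starRingEnd ℂ τ, uPar p ^ 2, τ;
     0, 0, starRingEnd ℂ (uPar p)]

/-- The reflection `R₃ = J·R₂·J⁻¹` of `S(p,τ)`. -/
def R3S (p : ℕ) (τ : ℂ) : Matrix (Fin 3) (Fin 3) ℂ :=
  !![starRingEnd ℂ (uPar p), 0, 0;
     0, starRingEnd ℂ (uPar p), 0;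
     τ, -(uPar p) * starRingEnd ℂ τ, uPar p ^ 2]

/-- The cyclic permutation matrix `J`. -/
def Jmat : Matrix (Fin 3) (Fin 3) ℂ :=
  !![0, 0, 1; 1, 0, 0; 0, 1, 0]

/-- The linear functional `x ↦ a·x₁ + b·x₂ + c·x₃` on `ℂ³`. -/
def lfun (a b c : ℂ) : (Fin 3 → ℂ) →ₗ[ℂ] ℂ :=
  a • (LinearMap.proj 0 : (Fin 3 → ℂ) →ₗ[ℂ] ℂ) +
    b • (LinearMap.proj 1 : (Fin 3 → ℂ) →ₗ[ℂ] ℂ) +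
    c • (LinearMap.proj 2 : (Fin 3 → ℂ) →ₗ[ℂ] ℂ)

/-- The mirror of `R₁`: `{x ∈ ℂ³ : α·x₁ + β·x₂ + conj(β)·x₃ = 0}`,
the `H`-orthogonal complement of `e₁`. -/
def mirror1 (p : ℕ) (τ : ℂ) : Submodule ℂ (Fin 3 → ℂ) :=
  LinearMap.ker (lfun (alphaPar p) (betaPar p τ) (starRingEnd ℂ (betaPar p τ)))

/-- The stabilizer of a subspace `m` of `ℂ³` inside a subgroup `S` of `GL(3,ℂ)`:
the set of elements of `S` mapping `m` onto itself. -/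
def mirrorStab (S : Subgroup (GL (Fin 3) ℂ)) (m : Submodule ℂ (Fin 3 → ℂ)) :
    Set (GL (Fin 3) ℂ) :=
  {g | g ∈ S ∧ m.map (Matrix.mulVecLin (g : Matrix (Fin 3) (Fin 3) ℂ)) = m}

end

/-!
Put `r = R₁`, `s = R₃ = J⁻¹R₁J` and `b = R₂R₃R₂⁻¹`, so that `b = g r g⁻¹` with `g = J r J`.
The element `b` preserves `m₂`, which contains its root `R₂e₃`, and everything in `S(p,τ)` that
commutes with `r` preserves the mirror `m₁` of `r`. Since `(rb)²` also conjugates `r` to `b` (braid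
relation of length 5), `g⁻¹(rb)²` commutes with `r`, which yields `g`. Since `(rs)² = (sr)²` (braid
relation of length 4), `srs` commutes with `r`; from `J·srs = r g²` we then get `J`.

Two reflections `1 + aφ`, `1 + bψ` with `φ(a) = ψ(b) = q - 1` satisfy a braid relation of
length 4 when `m = φ(b)ψ(a)` is `-2q`, and one of length 5 when `m² + 3qm + q² = 0`. Here `q = u³`.
If `|τ|² = 2`, then `m` is `-2u³` for `r, s` and `u³(t - 6)` with `t = τ³ + conj(τ)³` for `r, b`, so
the second condition becomes `t² - 9t + 19 = 0`.
-/

open scoped ComplexConjugate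

section BraidRelations

variable {R A : Type*} [CommRing R] [Ring A] [Algebra R A] {X Y : A} {q m : R}

theorem one_add_mul_one_add_sq (hX : X * X = (q - 1) • X) (hY : Y * Y = (q - 1) • Y)
    (hXYX : X * Y * X = m • X) (hYXY : Y * X * Y = m • Y) :
    ((1 + X) * (1 + Y)) ^ 2 =
      1 + (q + 1 + m) • (X + Y) + (2 * q + 1 + m) • (X * Y) + Y * X := by
  calc ((1 + X) * (1 + Y)) ^ 2
      = 1 + 2 • X + 2 • Y + 3 • (X * Y) + Y * X + X * X + Y * Y
          + X * X * Y + X * (Y * Y) + X * Y * X + Y * X * Y + X * Y * X * Y := by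
        noncomm_ring
    _ = _ := by
        simp only [hX, hY, hXYX, hYXY, smul_mul_assoc, mul_smul_comm]
        module

theorem one_add_mul_one_add_sq_comm (hX : X * X = (q - 1) • X) (hY : Y * Y = (q - 1) • Y)
    (hXYX : X * Y * X = m • X) (hYXY : Y * X * Y = m • Y) (hm : m = -2 * q) :
    ((1 + X) * (1 + Y)) ^ 2 = ((1 + Y) * (1 + X)) ^ 2 := by
  rw [one_add_mul_one_add_sq hX hY hXYX hYXY, one_add_mul_one_add_sq hY hX hYXY hXYX, hm]
  module

theorem semiconjBy_one_add_mul_one_add_sq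
    (hX : X * X = (q - 1) • X) (hY : Y * Y = (q - 1) • Y)
    (hXYX : X * Y * X = m • X) (hYXY : Y * X * Y = m • Y) (hm : m ^ 2 + 3 * q * m + q ^ 2 = 0) :
    SemiconjBy (((1 + X) * (1 + Y)) ^ 2) (1 + X) (1 + Y) := by
  have hYYX : Y * (Y * X) = (q - 1) • (Y * X) := by rw [← mul_assoc, hY, smul_mul_assoc]
  have hYXX : Y * (X * X) = (q - 1) • (Y * X) := by rw [hX, mul_smul_comm]
  rw [mul_assoc] at hXYX hYXY
  rw [SemiconjBy, one_add_mul_one_add_sq hX hY (by rwa [mul_assoc]) (by rwa [mul_assoc])]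
  simp only [mul_add, add_mul, mul_one, one_mul, smul_add, smul_mul_assoc, mul_smul_comm,
    mul_assoc, hX, hY, hXYX, hYXY, hYYX]
  linear_combination (norm := module) hm • (X - Y)

end BraidRelations

section ScaledReflection

variable {n R : Type*} [Fintype n] [CommRing R]

theorem vecMulVec_mul_self (a φ : n → R) :
    vecMulVec a φ * vecMulVec a φ = (φ ⬝ᵥ a) • vecMulVec a φ := by
  rw [vecMulVec_mul_vecMulVec, vecMulVec_smul]

theorem vecMulVec_mul_vecMulVec_mul_self (a φ b ψ : n → R) :
    vecMulVec a φ * vecMulVec b ψ * vecMulVec a φ =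
      ((φ ⬝ᵥ b) * (ψ ⬝ᵥ a)) • vecMulVec a φ := by
  rw [vecMulVec_mul_vecMulVec, vecMulVec_mul_vecMulVec, smul_dotProduct, vecMulVec_smul,
    smul_eq_mul]

variable [DecidableEq n]

/-- The map `x ↦ c (x + φ(x) a)`, a scalar multiple of the complex reflection with root `a`,
mirror `ker φ` and nontrivial eigenvalue `1 + φ(a)`. -/
def scaledReflection (c : R) (a φ : n → R) : Matrix n n R := c • (1 + vecMulVec a φ)

theorem scaledReflection_mulVec (c : R) (a φ x : n → R) :
    scaledReflection c a φ *ᵥ x = c • (x + (φ ⬝ᵥ x) • a) := by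
  rw [scaledReflection, smul_mulVec, add_mulVec, one_mulVec, vecMulVec_mulVec, op_smul_eq_smul]

theorem mul_scaledReflection_mul {M N : Matrix n n R} (h : M * N = 1) (c : R) (a φ : n → R) :
    M * scaledReflection c a φ * N = scaledReflection c (M *ᵥ a) (φ ᵥ* N) := by
  rw [scaledReflection, scaledReflection, mul_smul_comm, smul_mul_assoc, mul_add, add_mul,
    mul_one, h, mul_vecMulVec, vecMulVec_mul]

variable {q : R} {a φ b ψ : n → R}

theorem scaledReflection_mul_sq_comm (c d : R) (ha : φ ⬝ᵥ a = q - 1) (hb : ψ ⬝ᵥ b = q - 1)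
    (hm : (φ ⬝ᵥ b) * (ψ ⬝ᵥ a) = -2 * q) :
    (scaledReflection c a φ * scaledReflection d b ψ) ^ 2 =
      (scaledReflection d b ψ * scaledReflection c a φ) ^ 2 := by
  simp only [scaledReflection, smul_mul_smul_comm, smul_pow]
  rw [mul_comm c, one_add_mul_one_add_sq_comm (ha ▸ vecMulVec_mul_self a φ)
    (hb ▸ vecMulVec_mul_self b ψ) (vecMulVec_mul_vecMulVec_mul_self a φ b ψ)
    (mul_comm (φ ⬝ᵥ b) _ ▸ vecMulVec_mul_vecMulVec_mul_self b ψ a φ) hm]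

theorem semiconjBy_scaledReflection_mul_sq (c : R) (ha : φ ⬝ᵥ a = q - 1) (hb : ψ ⬝ᵥ b = q - 1)
    (hm : ((φ ⬝ᵥ b) * (ψ ⬝ᵥ a)) ^ 2 + 3 * q * ((φ ⬝ᵥ b) * (ψ ⬝ᵥ a)) + q ^ 2 = 0) :
    SemiconjBy ((scaledReflection c a φ * scaledReflection c b ψ) ^ 2)
      (scaledReflection c a φ) (scaledReflection c b ψ) := by
  have h := semiconjBy_one_add_mul_one_add_sq (ha ▸ vecMulVec_mul_self a φ)
    (hb ▸ vecMulVec_mul_self b ψ) (vecMulVec_mul_vecMulVec_mul_self a φ b ψ)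
    (mul_comm (φ ⬝ᵥ b) _ ▸ vecMulVec_mul_vecMulVec_mul_self b ψ a φ) hm
  simp only [SemiconjBy, scaledReflection, smul_mul_smul_comm, smul_pow]
  rw [h.eq, mul_comm ((c * c) ^ 2)]

end ScaledReflection

section InvariantSubspaces

variable {n K : Type*} [Fintype n] [DecidableEq n] [Field K] {c : K} {a φ : n → K}

theorem scaledReflection_mulVec_eq_smul_iff (hc : c ≠ 0) (ha : a ≠ 0) {x : n → K} :
    scaledReflection c a φ *ᵥ x = c • x ↔ φ ⬝ᵥ x = 0 := by
  rw [scaledReflection_mulVec, smul_right_inj hc, add_eq_left, smul_eq_zero_iff_left ha]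

theorem map_mulVecLin_eq_of_mulVec_mem (g : GL n K) (m : Submodule K (n → K))
    (h : ∀ x ∈ m, (g : Matrix n n K) *ᵥ x ∈ m) :
    m.map (g : Matrix n n K).mulVecLin = m := by
  refine Submodule.eq_of_le_of_finrank_eq (Submodule.map_le_iff_le_comap.2 h) ?_
  have hinj : Function.Injective (g : Matrix n n K).mulVecLin :=
    mulVec_injective_of_isUnit g.isUnit
  exact (Submodule.equivMapOfInjective _ hinj m).finrank_eq.symm

theorem map_mulVecLin_eq_of_root_mem {g : GL n K} (hg : (g : Matrix n n K) = scaledReflection c a φ)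
    {m : Submodule K (n → K)} (ha : a ∈ m) :
    m.map (g : Matrix n n K).mulVecLin = m := by
  refine map_mulVecLin_eq_of_mulVec_mem g m fun x hx => ?_
  rw [hg, scaledReflection_mulVec]
  exact m.smul_mem c (m.add_mem hx (m.smul_mem _ ha))

theorem dotProduct_mulVec_eq_zero_of_commute (hc : c ≠ 0) (ha : a ≠ 0) {M : Matrix n n K}
    (hM : Commute M (scaledReflection c a φ)) {x : n → K} (hx : φ ⬝ᵥ x = 0) :
    φ ⬝ᵥ (M *ᵥ x) = 0 := by
  rw [← scaledReflection_mulVec_eq_smul_iff hc ha] at hx ⊢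
  rw [mulVec_mulVec, ← hM.eq, ← mulVec_mulVec, hx, mulVec_smul]

end InvariantSubspaces

section Generation

variable {G : Type*} [Group G] {r j s b : G}

theorem semiconjBy_mul_mul_of_pow_three (hj : j ^ 3 = 1) :
    SemiconjBy (j * r * j) r (j * r * j⁻¹ * (j⁻¹ * r * j) * (j * r * j⁻¹)⁻¹) := by
  have hjj : j = j⁻¹ * j⁻¹ := by
    rw [← _root_.mul_inv_rev, eq_inv_iff_mul_eq_one, ← pow_three, hj]
  have hg : j * r * j = j * r * j⁻¹ * j⁻¹ := by
    rw [mul_assoc (j * r) j⁻¹, ← hjj]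
  rw [hg]
  exact SemiconjBy.mul_left (SemiconjBy.conj_mk _ _) (by simp [SemiconjBy, mul_assoc])

theorem mul_mul_mul_eq_of_semiconjBy (hj : j ^ 3 = 1) (hs : SemiconjBy j s r) :
    j * (s * r * s) = r * (j * r * j) * (j * r * j) := by
  have hs_eq : s = j * j * r * j := by
    have hjj : j⁻¹ = j * j := by rw [inv_eq_iff_mul_eq_one, ← pow_three, hj]
    rw [← hjj, mul_assoc, ← hs.eq, inv_mul_cancel_left]
  calc j * (s * r * s) = r * j * r * s := by simp only [← mul_assoc, hs.eq]
    _ = r * (j * r * j) * (j * r * j) := by simp only [hs_eq, mul_assoc]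

theorem closure_pair_le_of_braid {K : Subgroup G} (hj : j ^ 3 = 1)
    (hs : SemiconjBy j s r) (hb : SemiconjBy (j * r * j) r b)
    (hrs : (r * s) ^ 2 = (s * r) ^ 2) (hrb : SemiconjBy ((r * b) ^ 2) r b)
    (hcent : ∀ y ∈ Subgroup.closure {r, j}, Commute y r → y ∈ K)
    (hbK : b ∈ Subgroup.closure {r, j} → b ∈ K) :
    Subgroup.closure {r, j} ≤ K := by
  set S := Subgroup.closure {r, j}
  have hrS : r ∈ S := Subgroup.subset_closure (by simp)
  have hjS : j ∈ S := Subgroup.subset_closure (by simp)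
  have hgS : j * r * j ∈ S := mul_mem (mul_mem hjS hrS) hjS
  have hsS : s ∈ S := (S.mul_mem_cancel_left hjS).1 (hs.eq ▸ mul_mem hrS hjS)
  have hbS : b ∈ S := (S.mul_mem_cancel_right hgS).1 (hb.eq ▸ mul_mem hgS hrS)
  have hrK : r ∈ K := hcent r hrS (Commute.refl r)
  have hgK : j * r * j ∈ K := by
    have hgx : (j * r * j)⁻¹ * (r * b) ^ 2 ∈ K :=
      hcent _ (mul_mem (inv_mem hgS) (pow_mem (mul_mem hrS hbS) 2))
        (hb.inv_symm_left.mul_left hrb)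
    rw [K.mul_mem_cancel_right (pow_mem (mul_mem hrK (hbK hbS)) 2)] at hgx
    exact inv_mem_iff.1 hgx
  have hsrsK : s * r * s ∈ K := by
    refine hcent _ (mul_mem (mul_mem hsS hrS) hsS) ?_
    simpa only [Commute, SemiconjBy, sq, mul_assoc] using hrs.symm
  have hjK : j ∈ K := by
    rw [← K.mul_mem_cancel_right hsrsK, mul_mul_mul_eq_of_semiconjBy hj hs]
    exact mul_mem (mul_mem hrK hgK) hgK
  rw [Subgroup.closure_le]
  rintro y (rfl | rfl)
  exacts [hrK, hjK]

end Generation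

noncomputable section Parameters

theorem uPar_mul_conj (p : ℕ) : uPar p * conj (uPar p) = 1 := by
  have h : uPar p = Complex.exp ((2 * Real.pi / (3 * p) : ℝ) * Complex.I) := by
    rw [uPar]
    push_cast
    ring_nf
  rw [Complex.mul_conj', h, Complex.norm_exp_ofReal_mul_I]
  norm_num

theorem uPar_ne_zero (p : ℕ) : uPar p ≠ 0 := Complex.exp_ne_zero _

theorem conj_uPar (p : ℕ) : conj (uPar p) = (uPar p)⁻¹ :=
  eq_inv_of_mul_eq_one_right (uPar_mul_conj p)

theorem isPrimitiveRoot_uPar_pow_three {p : ℕ} (hp : p ≠ 0) : IsPrimitiveRoot (uPar p ^ 3) p := by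
  convert Complex.isPrimitiveRoot_exp p hp using 1
  rw [uPar, ← Complex.exp_nat_mul]
  congr 1
  push_cast
  field_simp

/-- The special parameter `τ = exp(−iπ/9)·(√5 + i√3)/2`. -/
def tauPar : ℂ :=
  Complex.exp (-(Real.pi * Complex.I) / 9) * ((Real.sqrt 5 + Complex.I * Real.sqrt 3) / 2)

theorem ofReal_sqrt_sq {x : ℝ} (hx : 0 ≤ x) : (Real.sqrt x : ℂ) ^ 2 = x := by
  rw [← Complex.ofReal_pow, Real.sq_sqrt hx]

theorem exp_neg_pi_mul_I_div_nine_pow_three :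
    Complex.exp (-(Real.pi * Complex.I) / 9) ^ 3 = (1 - Complex.I * Real.sqrt 3) / 2 := by
  have h : (3 : ℕ) * (-(Real.pi * Complex.I) / 9) = ((-(Real.pi / 3) : ℝ) : ℂ) * Complex.I := by
    push_cast
    ring
  rw [← Complex.exp_nat_mul, h, Complex.exp_mul_I, ← Complex.ofReal_cos, ← Complex.ofReal_sin,
    Real.cos_neg, Real.sin_neg, Real.cos_pi_div_three, Real.sin_pi_div_three]
  push_cast
  ring

theorem tauPar_mul_conj : tauPar * conj tauPar = 2 := by
  have hexp : ‖Complex.exp (-(Real.pi * Complex.I) / 9)‖ = 1 := by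
    simp [Complex.norm_exp]
  have h5 := ofReal_sqrt_sq (x := 5) (by norm_num)
  have h3 := ofReal_sqrt_sq (x := 3) (by norm_num)
  have hquot : ((Real.sqrt 5 + Complex.I * Real.sqrt 3) / 2) *
      conj ((Real.sqrt 5 + Complex.I * Real.sqrt 3) / 2) = 2 := by
    simp only [map_div₀, map_add, map_mul, map_ofNat, Complex.conj_ofReal, Complex.conj_I]
    push_cast at h5 h3
    linear_combination (h5 + h3) / 4 - (Real.sqrt 3 : ℂ) ^ 2 / 4 * Complex.I_sq
  rw [tauPar, map_mul, mul_mul_mul_comm, hquot, Complex.mul_conj', hexp]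
  norm_num

theorem tauPar_pow_three :
    tauPar ^ 3 =
      (9 - Real.sqrt 5 + Complex.I * (3 * Real.sqrt 3 + Real.sqrt 5 * Real.sqrt 3)) / 4 := by
  have h5 := ofReal_sqrt_sq (x := 5) (by norm_num)
  have h3 := ofReal_sqrt_sq (x := 3) (by norm_num)
  push_cast at h5 h3
  have hw : (Complex.I * Real.sqrt 3) ^ 2 = -3 := by
    rw [mul_pow, Complex.I_sq, h3]
    ring
  have hcube : (((Real.sqrt 5 : ℂ) + Complex.I * Real.sqrt 3) / 2) ^ 3 =
      (-Real.sqrt 5 + 3 * (Complex.I * Real.sqrt 3)) / 2 := by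
    linear_combination (Real.sqrt 5 + 3 * (Complex.I * Real.sqrt 3)) / 8 * h5 +
      (3 * Real.sqrt 5 + Complex.I * Real.sqrt 3) / 8 * hw
  rw [tauPar, mul_pow, exp_neg_pi_mul_I_div_nine_pow_three, hcube]
  linear_combination -3 / 4 * hw

theorem tauPar_pow_three_add_conj :
    tauPar ^ 3 + conj tauPar ^ 3 = (9 - Real.sqrt 5) / 2 := by
  rw [← map_pow, tauPar_pow_three]
  simp only [map_div₀, map_add, map_sub, map_mul, map_ofNat, Complex.conj_ofReal, Complex.conj_I]
  ring

theorem tauPar_pow_three_add_conj_quadratic :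
    (tauPar ^ 3 + conj tauPar ^ 3) ^ 2 - 9 * (tauPar ^ 3 + conj tauPar ^ 3) + 19 = 0 := by
  have h5 := ofReal_sqrt_sq (x := 5) (by norm_num)
  push_cast at h5
  rw [tauPar_pow_three_add_conj]
  linear_combination h5 / 4

end Parameters

noncomputable section Generators

variable {p : ℕ} {τ : ℂ}

/-- The linear form `φ₁` with `R₁ = ū(1 + e₁φ₁)`. -/
def coroot₁ (p : ℕ) (τ : ℂ) : Fin 3 → ℂ := ![uPar p ^ 3 - 1, uPar p * τ, -uPar p ^ 2 * conj τ]

/-- The linear form `φ₃` with `R₃ = ū(1 + e₃φ₃)`. -/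
def coroot₃ (p : ℕ) (τ : ℂ) : Fin 3 → ℂ := ![uPar p * τ, -uPar p ^ 2 * conj τ, uPar p ^ 3 - 1]

theorem Jmat_pow_three : Jmat ^ 3 = 1 := by
  simp [pow_three, Jmat, one_fin_three]

theorem R2S_mul_Jmat (p : ℕ) (τ : ℂ) : R2S p τ * Jmat = Jmat * R1S p τ := by
  simp [R2S, R1S, Jmat]

theorem Jmat_mul_R3S (p : ℕ) (τ : ℂ) : Jmat * R3S p τ = R1S p τ * Jmat := by
  simp [R3S, R1S, Jmat]

theorem R1S_eq_scaledReflection (p : ℕ) (τ : ℂ) :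
    R1S p τ = scaledReflection (conj (uPar p)) (Pi.single 0 1) (coroot₁ p τ) := by
  have hu := uPar_ne_zero p
  ext i k
  fin_cases i <;> fin_cases k <;> simp [R1S, scaledReflection, coroot₁, conj_uPar] <;> field_simp

theorem R3S_eq_scaledReflection (p : ℕ) (τ : ℂ) :
    R3S p τ = scaledReflection (conj (uPar p)) (Pi.single 2 1) (coroot₃ p τ) := by
  have hu := uPar_ne_zero p
  ext i k
  fin_cases i <;> fin_cases k <;> simp [R3S, scaledReflection, coroot₃, conj_uPar] <;> field_simp

theorem R2S_mulVec_single_two (p : ℕ) (τ : ℂ) :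
    R2S p τ *ᵥ Pi.single 2 1 = ![0, τ, conj (uPar p)] := by
  ext i
  fin_cases i <;> simp [R2S]

theorem R2S_mulVec_eq_single_zero (p : ℕ) (τ : ℂ) :
    R2S p τ *ᵥ ![uPar p, conj τ, 0] = Pi.single 0 1 := by
  have hu := uPar_ne_zero p
  ext i
  fin_cases i <;> simp [R2S, conj_uPar, hu]
  ring

theorem alphaPar_eq (p : ℕ) :
    alphaPar p = (conj (uPar p) ^ 3 - 1) * (uPar p ^ 3 - 1) := by
  have hu := uPar_ne_zero p
  rw [alphaPar, conj_uPar]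
  field_simp
  ring

theorem betaPar_eq (p : ℕ) (τ : ℂ) :
    betaPar p τ = (conj (uPar p) ^ 3 - 1) * (uPar p * τ) := by
  have hu := uPar_ne_zero p
  rw [betaPar, conj_uPar]
  field_simp

theorem conj_betaPar_eq (p : ℕ) (τ : ℂ) :
    conj (betaPar p τ) = (conj (uPar p) ^ 3 - 1) * (-uPar p ^ 2 * conj τ) := by
  have hu := uPar_ne_zero p
  rw [betaPar, map_mul, map_sub, map_pow, Complex.conj_conj, conj_uPar]
  field_simp
  ring

theorem lfun_eq_mul_dotProduct (p : ℕ) (τ : ℂ) (x : Fin 3 → ℂ) :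
    lfun (alphaPar p) (betaPar p τ) (conj (betaPar p τ)) x =
      (conj (uPar p) ^ 3 - 1) * (coroot₁ p τ ⬝ᵥ x) := by
  rw [alphaPar_eq, conj_betaPar_eq, betaPar_eq]
  simp only [lfun, LinearMap.add_apply, LinearMap.smul_apply, LinearMap.proj_apply, smul_eq_mul,
    coroot₁, vec3_dotProduct, cons_val]
  ring

theorem mem_mirror1_iff (hp : 2 ≤ p) {x : Fin 3 → ℂ} : x ∈ mirror1 p τ ↔ coroot₁ p τ ⬝ᵥ x = 0 := by
  have hne : conj (uPar p) ^ 3 - 1 ≠ 0 := by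
    rw [← map_pow, sub_ne_zero, map_ne_one_iff _ (starRingEnd ℂ).injective]
    exact (isPrimitiveRoot_uPar_pow_three (by omega)).ne_one hp
  rw [mirror1, LinearMap.mem_ker, lfun_eq_mul_dotProduct, mul_eq_zero, or_iff_right hne]

variable {j r₁ r₂ r₃ : GL (Fin 3) ℂ}

theorem coe_conj_eq_R2S (h₁ : (r₁ : Matrix (Fin 3) (Fin 3) ℂ) = R1S p τ)
    (hj : (j : Matrix (Fin 3) (Fin 3) ℂ) = Jmat) :
    ((j * r₁ * j⁻¹ : GL (Fin 3) ℂ) : Matrix (Fin 3) (Fin 3) ℂ) = R2S p τ := by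
  rw [Units.val_mul, Units.mul_inv_eq_iff_eq_mul, Units.val_mul, hj, h₁, R2S_mul_Jmat]

theorem coe_conj_eq_R3S (h₁ : (r₁ : Matrix (Fin 3) (Fin 3) ℂ) = R1S p τ)
    (hj : (j : Matrix (Fin 3) (Fin 3) ℂ) = Jmat) :
    ((j⁻¹ * r₁ * j : GL (Fin 3) ℂ) : Matrix (Fin 3) (Fin 3) ℂ) = R3S p τ := by
  rw [mul_assoc, Units.val_mul, Units.inv_mul_eq_iff_eq_mul, Units.val_mul, hj, h₁, Jmat_mul_R3S]

theorem map_mirror1_eq_of_commute (hp : 2 ≤ p) {g : GL (Fin 3) ℂ}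
    (hg : Commute (g : Matrix (Fin 3) (Fin 3) ℂ) (R1S p τ)) :
    (mirror1 p τ).map (g : Matrix (Fin 3) (Fin 3) ℂ).mulVecLin = mirror1 p τ := by
  have hc : conj (uPar p) ≠ 0 := right_ne_zero_of_mul_eq_one (uPar_mul_conj p)
  rw [R1S_eq_scaledReflection] at hg
  refine map_mulVecLin_eq_of_mulVec_mem g _ fun x hx => ?_
  rw [mem_mirror1_iff hp] at hx ⊢
  exact dotProduct_mulVec_eq_zero_of_commute hc (by simp) hg hx

theorem mul_sq_comm_of_coe_eq_R1S_R3S (hτ : τ * conj τ = 2)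
    (h₁ : (r₁ : Matrix (Fin 3) (Fin 3) ℂ) = R1S p τ)
    (h₃ : (r₃ : Matrix (Fin 3) (Fin 3) ℂ) = R3S p τ) :
    (r₁ * r₃) ^ 2 = (r₃ * r₁) ^ 2 := by
  apply Units.ext
  simp only [Units.val_pow_eq_pow_val, Units.val_mul, h₁, h₃]
  rw [R1S_eq_scaledReflection, R3S_eq_scaledReflection]
  apply scaledReflection_mul_sq_comm (q := uPar p ^ 3)
  · simp [coroot₁]
  · simp [coroot₃]
  · simp only [coroot₁, coroot₃, dotProduct_single_one, cons_val]
    linear_combination -uPar p ^ 3 * hτ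

theorem coe_conj_R3S_eq_scaledReflection (h₃ : (r₃ : Matrix (Fin 3) (Fin 3) ℂ) = R3S p τ) :
    ((r₂ * r₃ * r₂⁻¹ : GL (Fin 3) ℂ) : Matrix (Fin 3) (Fin 3) ℂ) =
      scaledReflection (conj (uPar p)) ((r₂ : Matrix (Fin 3) (Fin 3) ℂ) *ᵥ Pi.single 2 1)
        (coroot₃ p τ ᵥ* ((r₂⁻¹ : GL (Fin 3) ℂ) : Matrix (Fin 3) (Fin 3) ℂ)) := by
  rw [Units.val_mul, Units.val_mul, h₃, R3S_eq_scaledReflection,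
    mul_scaledReflection_mul r₂.mul_inv]

theorem semiconjBy_mul_conj_sq (hτ : τ * conj τ = 2)
    (hτ₃ : (τ ^ 3 + conj τ ^ 3) ^ 2 - 9 * (τ ^ 3 + conj τ ^ 3) + 19 = 0)
    (h₁ : (r₁ : Matrix (Fin 3) (Fin 3) ℂ) = R1S p τ)
    (h₂ : (r₂ : Matrix (Fin 3) (Fin 3) ℂ) = R2S p τ)
    (h₃ : (r₃ : Matrix (Fin 3) (Fin 3) ℂ) = R3S p τ) :
    SemiconjBy ((r₁ * (r₂ * r₃ * r₂⁻¹)) ^ 2) r₁ (r₂ * r₃ * r₂⁻¹) := by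
  have hu := uPar_mul_conj p
  have hinv : ((r₂⁻¹ : GL (Fin 3) ℂ) : Matrix (Fin 3) (Fin 3) ℂ) *ᵥ Pi.single 0 1 =
      ![uPar p, conj τ, 0] := by
    rw [← R2S_mulVec_eq_single_zero p τ, ← h₂, mulVec_mulVec, r₂.inv_mul, one_mulVec]
  have hφ : coroot₁ p τ ⬝ᵥ (R2S p τ *ᵥ Pi.single 2 1) = uPar p * (τ ^ 2 - conj τ) := by
    rw [R2S_mulVec_single_two]
    simp only [coroot₁, vec3_dotProduct, cons_val]
    linear_combination -uPar p * conj τ * hu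
  have hψ : (coroot₃ p τ ᵥ* ((r₂⁻¹ : GL (Fin 3) ℂ) : Matrix (Fin 3) (Fin 3) ℂ)) ⬝ᵥ Pi.single 0 1 =
      uPar p ^ 2 * (τ - conj τ ^ 2) := by
    rw [← dotProduct_mulVec, hinv]
    simp only [coroot₃, vec3_dotProduct, cons_val]
    ring
  have hφψ : uPar p * (τ ^ 2 - conj τ) * (uPar p ^ 2 * (τ - conj τ ^ 2)) =
      uPar p ^ 3 * (τ ^ 3 + conj τ ^ 3 - 6) := by
    linear_combination -uPar p ^ 3 * (τ * conj τ + 3) * hτ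
  apply SemiconjBy.units_of_val
  rw [Units.val_pow_eq_pow_val, Units.val_mul, coe_conj_R3S_eq_scaledReflection h₃, h₁, h₂,
    R1S_eq_scaledReflection]
  apply semiconjBy_scaledReflection_mul_sq (q := uPar p ^ 3)
  · simp [coroot₁]
  · rw [← dotProduct_mulVec, ← h₂, mulVec_mulVec, r₂.inv_mul, one_mulVec]
    simp [coroot₃]
  · rw [hφ, hψ, hφψ]
    linear_combination uPar p ^ 6 * hτ₃

end Generators

theorem stmt15_general {p : ℕ} (hp : 2 ≤ p) {τ : ℂ} (hτ : τ * conj τ = 2)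
    (hτ₃ : (τ ^ 3 + conj τ ^ 3) ^ 2 - 9 * (τ ^ 3 + conj τ ^ 3) + 19 = 0)
    {r₁ j : GL (Fin 3) ℂ} (hr₁ : (r₁ : Matrix (Fin 3) (Fin 3) ℂ) = R1S p τ)
    (hj : (j : Matrix (Fin 3) (Fin 3) ℂ) = Jmat) :
    Subgroup.closure
        (mirrorStab (Subgroup.closure {r₁, j}) (mirror1 p τ) ∪
          mirrorStab (Subgroup.closure {r₁, j})
            (Submodule.span ℂ {Pi.single 0 1, R2S p τ *ᵥ Pi.single 2 1})) =
      Subgroup.closure {r₁, j} := by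
  have hj3 : j ^ 3 = 1 := Units.ext (by rw [Units.val_pow_eq_pow_val, hj, Jmat_pow_three]; rfl)
  have hr₂ := coe_conj_eq_R2S hr₁ hj
  have hr₃ := coe_conj_eq_R3S hr₁ hj
  have hs : SemiconjBy j (j⁻¹ * r₁ * j) r₁ := by simp [SemiconjBy, mul_assoc]
  have hrs := mul_sq_comm_of_coe_eq_R1S_R3S hτ hr₁ hr₃
  have hrb := semiconjBy_mul_conj_sq hτ hτ₃ hr₁ hr₂ hr₃
  apply le_antisymm
  · rw [Subgroup.closure_le]
    exact Set.union_subset (fun _ h => h.1) fun _ h => h.1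
  refine closure_pair_le_of_braid hj3 hs (semiconjBy_mul_mul_of_pow_three hj3) hrs hrb
    (fun y hyS hy => ?_) fun hbS => ?_
  · exact Subgroup.subset_closure (Or.inl ⟨hyS, map_mirror1_eq_of_commute hp (hr₁ ▸ hy.units_val)⟩)
  · have hroot : R2S p τ *ᵥ Pi.single 2 1 ∈
        Submodule.span ℂ {Pi.single 0 1, R2S p τ *ᵥ Pi.single 2 1} :=
      Submodule.subset_span (by simp)
    exact Subgroup.subset_closure (Or.inr ⟨hbS, map_mulVecLin_eq_of_root_mem
      (coe_conj_R3S_eq_scaledReflection hr₃) (hr₂ ▸ hroot)⟩)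

/-- For `τ = exp(−iπ/9)·(√5+i√3)/2` and `p = 4`, the lattice `S(p,τ)` is generated
by the union of the stabilizers of the mirror of `R₁` and of the mirror
`span{e₁, R₂·e₃}` of the complex reflection `(R₁·R₂R₃R₂⁻¹)⁵`. -/
theorem stmt15 (p : ℕ) (hp : p = 4)
    (τ : ℂ)
    (hτ : τ = Complex.exp (-(Real.pi * Complex.I) / 9) *
        ((Real.sqrt 5 + Complex.I * Real.sqrt 3) / 2))
    (r₁ j : GL (Fin 3) ℂ)
    (hr₁ : (↑r₁ : Matrix (Fin 3) (Fin 3) ℂ) = R1S p τ)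
    (hj : (↑j : Matrix (Fin 3) (Fin 3) ℂ) = Jmat) :
    Subgroup.closure
        (mirrorStab (Subgroup.closure {r₁, j}) (mirror1 p τ) ∪
          mirrorStab (Subgroup.closure {r₁, j})
            (Submodule.span ℂ
              {Pi.single 0 1, (R2S p τ).mulVec (Pi.single 2 1)})) =
      Subgroup.closure {r₁, j} := by
  subst hp hτ
  exact stmt15_general (by norm_num) tauPar_mul_conj tauPar_pow_three_add_conj_quadratic hr₁ hj
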